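/- The quotient of B(4,3) by the normal closure of {P₁, P₂, P₃, P₄} is isomorphic to the quotient of B(4,3) by the third term γ₃(B(4,3)) of its lower central series. -/

import Mathlib

/-- The free Burnside group `B(4,3)` of exponent 3 on four generators:
the free group on four generators modulo the normal closure of all cubes. -/
abbrev B43 : Type :=
  FreeGroup (Fin 4) ⧸ Subgroup.normalClosure {w : FreeGroup (Fin 4) | ∃ v, w = v ^ 3}

/-- The images `x₁, x₂, x₃, x₄` of the free generators in `B(4,3)`. -/
def x (i : Fin 4) : B43 := QuotientGroup.mk (FreeGroup.of i)

/-- The elements `P_i` of `B(4,3)`: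
`P_i = x₁x₂⁻¹x₃x₄⁻¹x₁⁻¹x₂x₃⁻¹x₄ · x_i · x₄x₃⁻¹x₂x₁⁻¹x₄⁻¹x₃x₂⁻¹x₁ · x_i⁻¹`. -/
def P (i : Fin 4) : B43 :=
  x 0 * (x 1)⁻¹ * x 2 * (x 3)⁻¹ * (x 0)⁻¹ * x 1 * (x 2)⁻¹ * x 3 * x i *
    (x 3 * (x 2)⁻¹ * x 1 * (x 0)⁻¹ * (x 3)⁻¹ * x 2 * (x 1)⁻¹ * x 0) * (x i)⁻¹

/-!
In a group of exponent 3 every element commutes with its conjugates, i.e. the group is 2-Engel,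
and this is all the argument uses. In a 2-Engel group the normal closure of an element `g` is
abelian, and each `h` acts on it by conjugation as `1 + H` with `H ^ 2 = 0`. Applying this to a
product `h * k` gives `H * K = -K * H`, so triple commutators change sign under transpositions.
With the Hall-Witt identity this yields Levi's theorem: triple commutators are central, hence
`(g, h, k) ↦ ⁅⁅g, h⁆, k⁆` is an alternating trilinear map to the center.

Put `(a, b, c, d) = (x₁, x₂⁻¹, x₃, x₄⁻¹)`, `u = abcd` and `v = a⁻¹b⁻¹c⁻¹d⁻¹`. Then `Pᵢ = 1` says
that `xᵢ(vu)xᵢ⁻¹ = uv`; this holds in class two because `uv` is a product of commutators.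
Conversely, if it holds for all `i` then `uv` is central, and commuting `uv` with `a, b, c, d` gives
four linear equations in the four values of the alternating form at triples of distinct generators,
with only the trivial solution.
-/

open scoped commutatorElement

/-- A group is 2-Engel if it satisfies the identity `⁅⁅g, h⁆, h⁆ = 1`. -/
def IsTwoEngel (G : Type*) [Group G] : Prop :=
  ∀ g h : G, ⁅⁅g, h⁆, h⁆ = 1

section Groups

variable {G : Type*} [Group G]

theorem mul_conj_mul_conj_inv_eq_one (hG : ∀ g : G, g ^ 3 = 1) (g h : G) :
    g * (h * g * h⁻¹) * (h⁻¹ * g * h) = 1 := by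
  have hh : h⁻¹ * h⁻¹ = h := by
    rw [← mul_inv_rev, inv_eq_iff_mul_eq_one, ← pow_two, ← pow_succ, hG]
  calc g * (h * g * h⁻¹) * (h⁻¹ * g * h)
      = g * h * g * (h⁻¹ * h⁻¹) * g * h := by group
    _ = (g * h) ^ 3 := by rw [hh, pow_three]; group
    _ = 1 := hG _

theorem isTwoEngel_of_pow_three_eq_one (hG : ∀ g : G, g ^ 3 = 1) : IsTwoEngel G := by
  intro h g
  set p := h * g * h⁻¹ with hp
  set q := h⁻¹ * g * h
  have hpq : g * p * q = 1 := mul_conj_mul_conj_inv_eq_one hG g h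
  have hqp : g * q * p = 1 := by simpa using mul_conj_mul_conj_inv_eq_one hG g h⁻¹
  have hcomm_pq : Commute p q :=
    mul_left_cancel (a := g) (by rw [← mul_assoc, hpq, ← mul_assoc, hqp])
  have hcomm_pg : Commute p g := by
    rw [eq_inv_of_mul_eq_one_left ((mul_assoc g p q).symm.trans hpq)]
    exact ((Commute.refl p).mul_right hcomm_pq).inv_right
  rw [commutatorElement_eq_one_iff_commute, commutatorElement_def, ← hp]
  exact hcomm_pg.mul_left (Commute.refl g).inv_left

theorem closure_range_comp_eq_top {H ι : Type*} [Group H] {y : ι → G}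
    (hy : Subgroup.closure (Set.range y) = ⊤) {f : G →* H} (hf : Function.Surjective f) :
    Subgroup.closure (Set.range (f ∘ y)) = ⊤ := by
  rw [Set.range_comp, ← MonoidHom.map_closure, hy, Subgroup.map_top_of_surjective f hf]

theorem mem_center_of_forall_commute {ι : Type*} {y : ι → G}
    (hy : Subgroup.closure (Set.range y) = ⊤) {g : G} (hg : ∀ i, Commute (y i) g) :
    g ∈ Subgroup.center G := by
  simpa [Subgroup.center_eq_iInf hy, Subgroup.mem_centralizer_singleton_iff, eq_comm] using
    fun i ↦ (hg i).eq

theorem commutator_le_center_of_generators {ι : Type*} {y : ι → G}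
    (hy : Subgroup.closure (Set.range y) = ⊤)
    (h : ∀ i j k, ⁅⁅y i, y j⁆, y k⁆ = 1) : commutator G ≤ Subgroup.center G := by
  have hmem (i j : ι) : ⁅y i, y j⁆ ∈ Subgroup.center G :=
    mem_center_of_forall_commute hy fun k ↦
      (commutatorElement_eq_one_iff_commute.mp (h i j k)).symm
  let π := QuotientGroup.mk' (Subgroup.center G)
  have hπy : Subgroup.closure (Set.range (π ∘ y)) = ⊤ :=
    closure_range_comp_eq_top hy (QuotientGroup.mk'_surjective _)
  have hcomm (i j : ι) : Commute (π (y i)) (π (y j)) := by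
    rw [← commutatorElement_eq_one_iff_commute, ← map_commutatorElement]
    exact (QuotientGroup.eq_one_iff _).mpr (hmem i j)
  have hcenter : Subgroup.center (G ⧸ Subgroup.center G) = ⊤ := by
    rw [eq_top_iff, ← hπy, Subgroup.closure_le]
    rintro _ ⟨j, rfl⟩
    exact mem_center_of_forall_commute hπy fun i ↦ hcomm i j
  rw [← Subgroup.Normal.quotient_commutative_iff_commutator_le, ← commutator_eq_bot_iff,
    commutator_eq_bot_iff_center_eq_top, hcenter]

theorem mul_mem_center_of_forall_conj_eq {ι : Type*} {y : ι → G}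
    (hy : Subgroup.closure (Set.range y) = ⊤) {u v : G}
    (hu : u ∈ Subgroup.closure {g | ∃ i j, y i * (y j)⁻¹ = g})
    (h : ∀ i, y i * (v * u) * (y i)⁻¹ = u * v) : u * v ∈ Subgroup.center G := by
  have hdiff (i j : ι) : Commute (y i * (y j)⁻¹) (u * v) := by
    calc y i * (y j)⁻¹ * (u * v) = y i * (v * u) * (y j)⁻¹ := by rw [← h j]; group
      _ = u * v * (y i * (y j)⁻¹) := by rw [← h i]; group
  have hcomm_u : Commute u (u * v) := by
    have hle : Subgroup.closure {g | ∃ i j, y i * (y j)⁻¹ = g} ≤ Subgroup.centralizer {u * v} := by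
      rw [Subgroup.closure_le]
      rintro _ ⟨i, j, rfl⟩
      exact Subgroup.mem_centralizer_singleton_iff.mpr (hdiff i j)
    exact Subgroup.mem_centralizer_singleton_iff.mp (hle hu)
  have huv : v * u = u * v :=
    mul_left_cancel (a := u) (by rw [← mul_assoc, ← hcomm_u.eq])
  exact mem_center_of_forall_commute hy fun i ↦ mul_inv_eq_iff_eq_mul.mp (huv ▸ h i)

theorem mul_mul_mul_mul_inv_eq_commutators (a b c d : G) :
    a * b * c * d * (a⁻¹ * b⁻¹ * c⁻¹ * d⁻¹) = ⁅a, b⁆ * ⁅b * a, c⁆ * ⁅c * b * a, d⁆ := by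
  simp [mul_assoc, commutatorElement_def]

theorem commutatorElement_mul_left_of_mem_center {g h k : G}
    (hc : ⁅h, k⁆ ∈ Subgroup.center G) : ⁅g * h, k⁆ = ⁅g, k⁆ * ⁅h, k⁆ := by
  rw [commutatorElement_mul_left_eq_conj_mul, Subgroup.mem_center_iff.mp hc g, mul_inv_cancel_right,
    Subgroup.mem_center_iff.mp hc]

theorem commutatorElement_mul_right_of_mem_center {g h k : G}
    (hc : ⁅g, k⁆ ∈ Subgroup.center G) : ⁅g, h * k⁆ = ⁅g, h⁆ * ⁅g, k⁆ := by
  rw [commutatorElement_mul_right_eq_mul_conj, mul_assoc _ h, Subgroup.mem_center_iff.mp hc h,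
    ← mul_assoc, mul_inv_cancel_right]

theorem lowerCentralSeries_two_le_iff {N : Subgroup G} [N.Normal] :
    (⊤ : Subgroup G).lowerCentralSeries 2 ≤ N ↔
      commutator (G ⧸ N) ≤ Subgroup.center (G ⧸ N) := by
  rw [← Subgroup.commutator_top_right_eq_bot_iff_le_center, ← Subgroup.top_lowerCentralSeries_one,
    ← Subgroup.lowerCentralSeries_succ,
    ← Subgroup.map_top_of_surjective _ (QuotientGroup.mk'_surjective N),
    ← Subgroup.map_lowerCentralSeries, Subgroup.map_eq_bot_iff, QuotientGroup.ker_mk']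

end Groups

theorem sub_one_mul_sub_one_anticomm {M R : Type*} [Monoid M] [Ring R] (ρ : M →* R)
    (hρ : ∀ m, (ρ m - 1) * (ρ m - 1) = 0) (m n : M) :
    (ρ m - 1) * (ρ n - 1) = -((ρ n - 1) * (ρ m - 1)) := by
  set Y := ρ m - 1
  set Z := ρ n - 1
  have hY : Y * Y = 0 := hρ m
  have hZ : Z * Z = 0 := hρ n
  have hYZ : ρ (m * n) - 1 = Y + Z + Y * Z := by simp only [map_mul, Y, Z]; noncomm_ring
  have hsum : Y * Z + Z * Y + Y * Z * Y + Z * Y * Z + Y * Z * Y * Z = 0 := by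
    have h := hρ (m * n)
    simp only [hYZ, mul_add, add_mul, ← mul_assoc, hY, hZ, zero_mul, mul_assoc _ Z Z, mul_zero] at h
    rw [← h]; abel
  have hYZYZ : Y * Z * Y * Z = 0 := by
    have h := congrArg (Y * · * Z) hsum
    simpa [mul_add, add_mul, ← mul_assoc, hY, mul_assoc _ Z Z, hZ] using h
  have hYZY : Y * Z * Y = 0 := by
    have h := congrArg (Y * ·) hsum
    simpa [mul_add, ← mul_assoc, hY, hYZYZ] using h
  have hZYZ : Z * Y * Z = 0 := by
    have h := congrArg (· * Z) hsum
    simpa [add_mul, hYZY, mul_assoc _ Z Z, hZ] using h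
  rw [hYZY, hZYZ, zero_mul, add_zero, add_zero, add_zero] at hsum
  exact eq_neg_of_add_eq_zero_left hsum

/-- A function of three indices that changes sign under the two adjacent transpositions and
vanishes when its first two arguments agree. The last condition is separate because `A` may have
2-torsion. -/
structure IsAlternatingTriple {ι A : Type*} [AddCommGroup A] (t : ι → ι → ι → A) : Prop where
  swap_left (i j k : ι) : t j i k = -t i j k
  swap_right (i j k : ι) : t i k j = -t i j k
  self_left (i k : ι) : t i i k = 0

namespace IsAlternatingTriple

variable {ι A : Type*} [AddCommGroup A] {t : ι → ι → ι → A}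

theorem self_outer (ht : IsAlternatingTriple t) (i k : ι) : t i k i = 0 := by
  rw [ht.swap_right, ht.self_left, neg_zero]

theorem rotate (ht : IsAlternatingTriple t) (i j k : ι) : t k i j = t i j k := by
  rw [ht.swap_left, ht.swap_right, neg_neg]

theorem eq_zero_of_forall_lt [LinearOrder ι] (ht : IsAlternatingTriple t)
    (hlt : ∀ i j k, i < j → j < k → t i j k = 0) (i j k : ι) : t i j k = 0 := by
  have hleft := ht.swap_left
  have hright := ht.swap_right
  have hself := ht.self_left
  rcases lt_trichotomy i j with hij | hij | hij <;>
  rcases lt_trichotomy j k with hjk | hjk | hjk <;>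
  rcases lt_trichotomy i k with hik | hik | hik <;> grind

theorem eq_zero_of_sum_eq_zero {t : Fin 4 → Fin 4 → Fin 4 → A} (ht : IsAlternatingTriple t)
    (hsum : ∀ l, t l 0 1 + (t l 1 2 + t l 0 2) + (t l 2 3 + t l 1 3 + t l 0 3) = 0)
    (i j k : Fin 4) : t i j k = 0 := by
  have hsum₀ : t 0 1 2 + (t 0 2 3 + t 0 1 3) = 0 := by
    simpa [ht.self_left] using hsum 0
  have hsum₁ : -t 0 1 2 + (t 1 2 3 + -t 0 1 3) = 0 := by
    simpa [ht.self_left, ht.self_outer, ht.swap_left 0 1] using hsum 1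
  have hsum₂ : t 0 1 2 + (-t 1 2 3 + -t 0 2 3) = 0 := by
    simpa [ht.self_left, ht.self_outer, ht.rotate 0 1 2, ht.swap_left 0 2, ht.swap_left 1 2]
      using hsum 2
  have hsum₃ : t 0 1 3 + (t 1 2 3 + t 0 2 3) = 0 := by
    simpa [ht.self_outer, ht.rotate 0 1 3, ht.rotate 1 2 3, ht.rotate 0 2 3] using hsum 3
  have h₀₁₂ : t 0 1 2 = 0 := by grind
  have h₁₂₃ : t 1 2 3 = 0 := by grind
  have h₀₁₃ : t 0 1 3 = 0 := by grind
  have h₀₂₃ : t 0 2 3 = 0 := by grind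
  refine ht.eq_zero_of_forall_lt (fun i j k hij hjk ↦ ?_) i j k
  fin_cases i <;> fin_cases j <;> fin_cases k <;>
    first | assumption | exact absurd hij (by decide) | exact absurd hjk (by decide)

end IsAlternatingTriple

namespace IsTwoEngel

variable {G : Type*} [Group G]

theorem of_surjective {H : Type*} [Group H] (hG : IsTwoEngel G) {f : G →* H}
    (hf : Function.Surjective f) : IsTwoEngel H := by
  intro a b
  obtain ⟨g, rfl⟩ := hf a
  obtain ⟨h, rfl⟩ := hf b
  rw [← map_commutatorElement, ← map_commutatorElement, hG, map_one]

theorem commute_commutator_right (hG : IsTwoEngel G) (g h : G) : Commute ⁅g, h⁆ h :=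
  commutatorElement_eq_one_iff_commute.mp (hG g h)

theorem commute_commutator_left (hG : IsTwoEngel G) (g h : G) : Commute ⁅g, h⁆ g := by
  rw [← commutatorElement_inv h g]
  exact (hG.commute_commutator_right h g).inv_left

theorem commutator_inv_left (hG : IsTwoEngel G) (g h : G) : ⁅g⁻¹, h⁆ = ⁅g, h⁆⁻¹ := by
  rw [commutatorElement_inv_left, mul_assoc, (hG.commute_commutator_right h g).eq,
    inv_mul_cancel_left, commutatorElement_inv]

theorem commute_conj (hG : IsTwoEngel G) (g h : G) : Commute g (h * g * h⁻¹) := by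
  have hconj : h * g * h⁻¹ = ⁅h, g⁆ * g := by rw [commutatorElement_def, inv_mul_cancel_right]
  rw [hconj]
  exact (hG.commute_commutator_right h g).symm.mul_right (Commute.refl g)

theorem isMulCommutative_normalClosure_singleton (hG : IsTwoEngel G) (g : G) :
    IsMulCommutative (Subgroup.normalClosure {g}) := by
  refine Subgroup.isMulCommutative_closure fun a ha b hb ↦ ?_
  simp only [Group.mem_conjugatesOfSet_iff, Set.mem_singleton_iff, exists_eq_left] at ha hb
  obtain ⟨c, rfl⟩ := isConj_iff.mp (ha.symm.trans hb)
  exact hG.commute_conj a c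

open scoped IsMulCommutative in
theorem commutator_commutator_anticomm_of_mem (hG : IsTwoEngel G) {N : Subgroup G} [N.Normal]
    [IsMulCommutative N] {n : G} (hn : n ∈ N) (h k : G) : ⁅h, ⁅k, n⁆⁆ = ⁅k, ⁅h, n⁆⁆⁻¹ := by
  let ρ := Representation.ofMulDistribMulAction (ConjAct G) N
  have coe_sub_one (a : ConjAct G) (m : Additive N) :
      (((ρ a - 1) m).toMul : G) = ⁅ConjAct.ofConjAct a, (m.toMul : G)⁆ := by
    change (ConjAct.ofConjAct a * (m.toMul : G) * (ConjAct.ofConjAct a)⁻¹) / (m.toMul : G) = _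
    rw [commutatorElement_def, div_eq_mul_inv]
  have coe_mul (a b : ConjAct G) (m : Additive N) : ((((ρ a - 1) * (ρ b - 1)) m).toMul : G) =
      ⁅ConjAct.ofConjAct a, ⁅ConjAct.ofConjAct b, (m.toMul : G)⁆⁆ := by
    rw [Module.End.mul_apply, coe_sub_one, coe_sub_one]
  have hsq (a : ConjAct G) : (ρ a - 1) * (ρ a - 1) = 0 := by
    refine LinearMap.ext fun m ↦ Additive.toMul.injective (Subtype.ext ?_)
    exact (coe_mul a a m).trans
      (commutatorElement_eq_one_iff_commute.mpr (hG.commute_commutator_left _ _).symm)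
  have hanti := sub_one_mul_sub_one_anticomm ρ hsq (ConjAct.toConjAct h) (ConjAct.toConjAct k)
  have happly := congrArg (fun φ ↦ ((φ (Additive.ofMul (⟨n, hn⟩ : N))).toMul : G)) hanti
  exact (coe_mul _ _ _).symm.trans (happly.trans (congrArg (·⁻¹) (coe_mul _ _ _)))

theorem commutator_swap_left (hG : IsTwoEngel G) (g h k : G) : ⁅⁅h, g⁆, k⁆ = ⁅⁅g, h⁆, k⁆⁻¹ := by
  rw [← commutatorElement_inv g h, hG.commutator_inv_left]

theorem commutator_swap_right (hG : IsTwoEngel G) (g h k : G) : ⁅⁅g, k⁆, h⁆ = ⁅⁅g, h⁆, k⁆⁻¹ := by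
  have := hG.isMulCommutative_normalClosure_singleton g
  have hanti := hG.commutator_commutator_anticomm_of_mem
    (Subgroup.subset_normalClosure (Set.mem_singleton g)) h k
  rw [hG.commutator_swap_left k, hG.commutator_swap_left h, commutatorElement_inv, hanti,
    commutatorElement_inv, inv_inv]

theorem commutator_rotate (hG : IsTwoEngel G) (g h k : G) : ⁅⁅h, k⁆, g⁆ = ⁅⁅g, h⁆, k⁆ := by
  rw [hG.commutator_swap_right h g k, hG.commutator_swap_left g h k, inv_inv]

theorem commutator_commutator_conj (hG : IsTwoEngel G) (g h k : G) :
    ⁅⁅g, h⁆, h * k * h⁻¹⁆ = ⁅⁅g, h⁆, k⁆ := by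
  have hfix : h * ⁅g, h⁆ * h⁻¹ = ⁅g, h⁆ :=
    mul_inv_eq_of_eq_mul (hG.commute_commutator_right g h).symm.eq
  have hcomm : Commute h ⁅⁅g, h⁆, k⁆ := by
    rw [hG.commutator_swap_right g k h]
    exact (hG.commute_commutator_right _ h).symm.inv_right
  calc ⁅⁅g, h⁆, h * k * h⁻¹⁆ = h * ⁅⁅g, h⁆, k⁆ * h⁻¹ := by
        rw [conjugate_commutatorElement, hfix]
    _ = ⁅⁅g, h⁆, k⁆ := mul_inv_eq_of_eq_mul hcomm.eq

theorem commutator_commutator_pow_three (hG : IsTwoEngel G) (g h k : G) :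
    ⁅⁅g, h⁆, k⁆ ^ 3 = 1 := by
  have hallWitt := commutatorElement_commutatorElement_conj_mul g h k
  rwa [hG.commutator_commutator_conj, hG.commutator_commutator_conj,
    hG.commutator_commutator_conj, hG.commutator_rotate g h k, ← hG.commutator_rotate k g h,
    mul_assoc, ← pow_three] at hallWitt

theorem commutator_commutator_commutator_eq_one (hG : IsTwoEngel G) (g h k l : G) :
    ⁅⁅⁅g, h⁆, k⁆, l⁆ = 1 := by
  -- Exchanging the pairs `(g, h)` and `(k, l)` both fixes and inverts the commutator, so its square
  -- is trivial, as is its cube.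
  have hsymm : ⁅⁅⁅k, l⁆, g⁆, h⁆ = ⁅⁅⁅g, h⁆, k⁆, l⁆ := by
    rw [hG.commutator_rotate g k l, hG.commutator_swap_right _ h l, hG.commutator_swap_right g h k,
      hG.commutator_inv_left, inv_inv]
  have hanti : ⁅⁅⁅k, l⁆, g⁆, h⁆ = ⁅⁅⁅g, h⁆, k⁆, l⁆⁻¹ := by
    rw [← hG.commutator_rotate _ g h, ← hG.commutator_rotate _ k l, commutatorElement_inv]
  have hself : ⁅⁅⁅g, h⁆, k⁆, l⁆⁻¹ = ⁅⁅⁅g, h⁆, k⁆, l⁆ := hanti.symm.trans hsymm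
  have hcube := hG.commutator_commutator_pow_three ⁅g, h⁆ k l
  rwa [pow_three', mul_eq_one_iff_inv_eq.mpr hself, one_mul] at hcube

theorem commutator_commutator_mem_center (hG : IsTwoEngel G) (g h k : G) :
    ⁅⁅g, h⁆, k⁆ ∈ Subgroup.center G :=
  Subgroup.mem_center_iff.mpr fun l ↦
    (commutatorElement_eq_one_iff_mul_comm.mp
      (hG.commutator_commutator_commutator_eq_one g h k l)).symm

/-- The triple commutator `⁅⁅g, h⁆, k⁆` of a 2-Engel group, as a homomorphism in `k` with values in
the center. -/
def tripleCommutator (hG : IsTwoEngel G) (g h : G) : G →* Subgroup.center G where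
  toFun k := ⟨⁅⁅g, h⁆, k⁆, hG.commutator_commutator_mem_center g h k⟩
  map_one' := Subtype.ext (commutatorElement_one_right _)
  map_mul' _ l := Subtype.ext <|
    commutatorElement_mul_right_of_mem_center (hG.commutator_commutator_mem_center g h l)

theorem tripleCommutator_rotate (hG : IsTwoEngel G) (g h k : G) :
    hG.tripleCommutator h k g = hG.tripleCommutator g h k :=
  Subtype.ext (hG.commutator_rotate g h k)

open scoped IsMulCommutative in
theorem isAlternatingTriple_tripleCommutator (hG : IsTwoEngel G) {ι : Type*} (y : ι → G) :
    IsAlternatingTriple fun i j k ↦ Additive.ofMul (hG.tripleCommutator (y i) (y j) (y k)) where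
  swap_left _ _ _ := congrArg Additive.ofMul (Subtype.ext (hG.commutator_swap_left _ _ _))
  swap_right _ _ _ := congrArg Additive.ofMul (Subtype.ext (hG.commutator_swap_right _ _ _))
  self_left i k := congrArg Additive.ofMul <| Subtype.ext <| by
    change ⁅⁅y i, y i⁆, y k⁆ = 1
    rw [commutatorElement_self, commutatorElement_one_left]

theorem tripleCommutator_prod_eq_one (hG : IsTwoEngel G) {a b c d : G}
    (hcenter : a * b * c * d * (a⁻¹ * b⁻¹ * c⁻¹ * d⁻¹) ∈ Subgroup.center G) (g : G) :
    hG.tripleCommutator g a b * (hG.tripleCommutator g b c * hG.tripleCommutator g a c) *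
      (hG.tripleCommutator g c d * hG.tripleCommutator g b d * hG.tripleCommutator g a d) = 1 := by
  have hcomm : ⁅⁅a, b⁆ * ⁅b * a, c⁆ * ⁅c * b * a, d⁆, g⁆ = 1 := by
    rw [← mul_mul_mul_mul_inv_eq_commutators, commutatorElement_eq_one_iff_mul_comm]
    exact (Subgroup.mem_center_iff.mp hcenter g).symm
  rw [commutatorElement_mul_left_of_mem_center (hG.commutator_commutator_mem_center _ _ _),
    commutatorElement_mul_left_of_mem_center (hG.commutator_commutator_mem_center _ _ _)] at hcomm
  have hprod : hG.tripleCommutator a b g * hG.tripleCommutator (b * a) c g *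
      hG.tripleCommutator (c * b * a) d g = 1 := Subtype.ext hcomm
  rw [hG.tripleCommutator_rotate g a b, ← hG.tripleCommutator_rotate (b * a),
    ← hG.tripleCommutator_rotate (c * b * a)] at hprod
  simpa only [map_mul, hG.tripleCommutator_rotate] using hprod

open scoped IsMulCommutative in
theorem commutator_commutator_eq_one_of_mem_center (hG : IsTwoEngel G) {y : Fin 4 → G}
    (hcenter : y 0 * y 1 * y 2 * y 3 * ((y 0)⁻¹ * (y 1)⁻¹ * (y 2)⁻¹ * (y 3)⁻¹) ∈
      Subgroup.center G) (i j k : Fin 4) : ⁅⁅y i, y j⁆, y k⁆ = 1 :=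
  congrArg (fun t ↦ (t.toMul : G)) <|
    (hG.isAlternatingTriple_tripleCommutator y).eq_zero_of_sum_eq_zero
      (fun l ↦ hG.tripleCommutator_prod_eq_one hcenter (y l)) i j k

end IsTwoEngel

section Relators

variable {G : Type*} [Group G]

/-- The element `P i`, as a word in an arbitrary family `y` of four group elements. -/
def relator (y : Fin 4 → G) (i : Fin 4) : G :=
  y 0 * (y 1)⁻¹ * y 2 * (y 3)⁻¹ * (y 0)⁻¹ * y 1 * (y 2)⁻¹ * y 3 * y i *
    (y 3 * (y 2)⁻¹ * y 1 * (y 0)⁻¹ * (y 3)⁻¹ * y 2 * (y 1)⁻¹ * y 0) * (y i)⁻¹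

theorem map_relator {H : Type*} [Group H] (f : G →* H) (y : Fin 4 → G) (i : Fin 4) :
    f (relator y i) = relator (f ∘ y) i := by
  simp only [relator, map_mul, map_inv, Function.comp_apply]

/-- The word `y₀ y₁⁻¹ y₂ y₃⁻¹`, from which the relators are built: with `u = alternatingWord y` and
`v = alternatingWord y⁻¹`, the `i`-th relator is `(u v) yᵢ (v u)⁻¹ yᵢ⁻¹`. -/
def alternatingWord (y : Fin 4 → G) : G :=
  y 0 * (y 1)⁻¹ * y 2 * (y 3)⁻¹

theorem relator_eq_one_iff (y : Fin 4 → G) (i : Fin 4) :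
    relator y i = 1 ↔ y i * (alternatingWord y⁻¹ * alternatingWord y) * (y i)⁻¹ =
      alternatingWord y * alternatingWord y⁻¹ := by
  have hrel : relator y i = alternatingWord y * alternatingWord y⁻¹ *
      (y i * (alternatingWord y⁻¹ * alternatingWord y) * (y i)⁻¹)⁻¹ := by
    simp only [relator, alternatingWord, Pi.inv_apply, inv_inv, mul_inv_rev, mul_assoc]
  rw [hrel, mul_inv_eq_one, eq_comm]

theorem alternatingWord_mem_closure (y : Fin 4 → G) :
    alternatingWord y ∈ Subgroup.closure {g | ∃ i j, y i * (y j)⁻¹ = g} := by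
  rw [alternatingWord, mul_assoc]
  exact mul_mem (Subgroup.subset_closure ⟨0, 1, rfl⟩) (Subgroup.subset_closure ⟨2, 3, rfl⟩)

theorem alternatingWord_mul_inv_mem_commutator (y : Fin 4 → G) :
    alternatingWord y * alternatingWord y⁻¹ ∈ commutator G := by
  have hword := mul_mul_mul_mul_inv_eq_commutators (y 0) (y 1)⁻¹ (y 2) (y 3)⁻¹
  simp only [alternatingWord, Pi.inv_apply] at hword ⊢
  rw [hword]
  have hmem (g h : G) : ⁅g, h⁆ ∈ commutator G :=
    Subgroup.commutator_mem_commutator (Subgroup.mem_top g) (Subgroup.mem_top h)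
  exact mul_mem (mul_mem (hmem _ _) (hmem _ _)) (hmem _ _)

theorem relator_eq_one_of_commutator_le_center (hG : commutator G ≤ Subgroup.center G)
    (y : Fin 4 → G) (i : Fin 4) : relator y i = 1 := by
  have hcenter := Subgroup.mem_center_iff.mp (hG (alternatingWord_mul_inv_mem_commutator y))
  have hswap : alternatingWord y⁻¹ * alternatingWord y =
      alternatingWord y * alternatingWord y⁻¹ := by
    refine mul_left_cancel (a := alternatingWord y) ?_
    rw [← mul_assoc, hcenter]
  rw [relator_eq_one_iff, hswap, hcenter, mul_inv_cancel_right]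

theorem closure_range_signed_eq_top {y : Fin 4 → G} (hy : Subgroup.closure (Set.range y) = ⊤) :
    Subgroup.closure (Set.range ![y 0, (y 1)⁻¹, y 2, (y 3)⁻¹]) = ⊤ := by
  set z := ![y 0, (y 1)⁻¹, y 2, (y 3)⁻¹]
  have hz (i : Fin 4) : z i ∈ Subgroup.closure (Set.range z) :=
    Subgroup.subset_closure (Set.mem_range_self i)
  rw [eq_top_iff, ← hy, Subgroup.closure_le, Set.range_subset_iff]
  intro i
  fin_cases i
  exacts [hz 0, inv_mem_iff.mp (hz 1), hz 2, inv_mem_iff.mp (hz 3)]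

theorem IsTwoEngel.commutator_le_center_of_relators (hG : IsTwoEngel G) {y : Fin 4 → G}
    (hy : Subgroup.closure (Set.range y) = ⊤) (hrel : ∀ i, relator y i = 1) :
    commutator G ≤ Subgroup.center G := by
  have hcenter : alternatingWord y * alternatingWord y⁻¹ ∈ Subgroup.center G :=
    mul_mem_center_of_forall_conj_eq hy (alternatingWord_mem_closure y) fun i ↦
      (relator_eq_one_iff y i).mp (hrel i)
  exact commutator_le_center_of_generators (closure_range_signed_eq_top hy) <|
    hG.commutator_commutator_eq_one_of_mem_center hcenter

theorem IsTwoEngel.normalClosure_range_relator (hG : IsTwoEngel G) {y : Fin 4 → G}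
    (hy : Subgroup.closure (Set.range y) = ⊤) :
    Subgroup.normalClosure (Set.range (relator y)) = (⊤ : Subgroup G).lowerCentralSeries 2 := by
  refine le_antisymm (Subgroup.normalClosure_le_normal ?_) ?_
  · rintro _ ⟨i, rfl⟩
    rw [SetLike.mem_coe, ← QuotientGroup.eq_one_iff, ← QuotientGroup.mk'_apply, map_relator]
    exact relator_eq_one_of_commutator_le_center (lowerCentralSeries_two_le_iff.mp le_rfl) _ i
  · set N := Subgroup.normalClosure (Set.range (relator y))
    have hsurj := QuotientGroup.mk'_surjective N
    refine lowerCentralSeries_two_le_iff.mpr <|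
      (hG.of_surjective hsurj).commutator_le_center_of_relators
        (closure_range_comp_eq_top hy hsurj) fun i ↦ ?_
    rw [← map_relator, QuotientGroup.mk'_apply, QuotientGroup.eq_one_iff]
    exact Subgroup.subset_normalClosure (Set.mem_range_self i)

end Relators

theorem B43_pow_three (g : B43) : g ^ 3 = 1 := by
  obtain ⟨w, rfl⟩ := QuotientGroup.mk_surjective g
  rw [← QuotientGroup.mk_pow, QuotientGroup.eq_one_iff]
  exact Subgroup.subset_normalClosure ⟨w, rfl⟩

theorem closure_range_x : Subgroup.closure (Set.range x) = ⊤ := by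
  have hx : x = QuotientGroup.mk' _ ∘ FreeGroup.of := rfl
  rw [hx]
  exact closure_range_comp_eq_top (FreeGroup.closure_range_of _) (QuotientGroup.mk'_surjective _)

theorem range_relator_x : Set.range (relator x) = {P 0, P 1, P 2, P 3} := by
  have hrel : relator x = P := rfl
  rw [hrel]
  ext g
  simp [Fin.exists_fin_succ, eq_comm]

theorem quotient_P_iso_quotient_gamma3_general {G : Type*} [Group G] (hG : IsTwoEngel G)
    {y : Fin 4 → G} (hy : Subgroup.closure (Set.range y) = ⊤) :
    Nonempty ((G ⧸ Subgroup.normalClosure (Set.range (relator y))) ≃*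
      (G ⧸ (⊤ : Subgroup G).lowerCentralSeries 2)) :=
  ⟨QuotientGroup.quotientMulEquivOfEq (hG.normalClosure_range_relator hy)⟩

/-- The quotient of `B(4,3)` by the normal closure of `{P₁, P₂, P₃, P₄}` is
isomorphic to the quotient of `B(4,3)` by the third term `γ₃(B(4,3))` of its
lower central series (Mathlib: `lowerCentralSeries B43 2`). -/
theorem quotient_P_iso_quotient_gamma3 :
    Nonempty
      ((B43 ⧸ Subgroup.normalClosure ({P 0, P 1, P 2, P 3} : Set B43)) ≃*
        (B43 ⧸ (⊤ : Subgroup B43).lowerCentralSeries 2)) := by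
  rw [← range_relator_x]
  exact quotient_P_iso_quotient_gamma3_general (isTwoEngel_of_pow_three_eq_one B43_pow_three)
    closure_range_x
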